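/- Let n ≥ 1, let f ∈ Q₀ⁿ, and suppose there exists a ∈ [e^{−n}, 1] such that a·‖f‖_∞·1_{B₂ⁿ} ≤ f pointwise (which holds when f is in John's position). Then for every integer k with 0 ≤ k ≤ n−1, W_{n−k}(f) ≤ b_{n,k} · ‖f‖₁, where b_{n,k} = ((n+k+1)·(n+k+2)···(2n)) / ((k+1)·(k+2)···n) = ∏_{j=k+1}^{n} (n+j)/j. -/

import Mathlib

open MeasureTheory

noncomputable section

/-- `ℝⁿ` with its Euclidean structure. -/
abbrev Eucl (n : ℕ) := EuclideanSpace ℝ (Fin n)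

/-- `f : ℝⁿ → [0,∞)` is log-concave:
`f(tx+(1−t)y) ≥ f(x)^t · f(y)^(1−t)` for all `x, y` and `t ∈ (0,1)`. -/
def IsLogConcave {n : ℕ} (f : Eucl n → ℝ) : Prop :=
  ∀ x y : Eucl n, ∀ t : ℝ, 0 < t → t < 1 →
    f x ^ t * f y ^ (1 - t) ≤ f (t • x + (1 - t) • y)

/-- The class `Q₀ⁿ`: nonnegative, log-concave, upper semicontinuous, integrable
functions with positive integral. -/
def MemQ0 {n : ℕ} (f : Eucl n → ℝ) : Prop :=
  (∀ x, 0 ≤ f x) ∧ IsLogConcave f ∧ UpperSemicontinuous f ∧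
    Integrable f ∧ 0 < ∫ x, f x

/-- `‖f‖_∞ = sup f`. -/
def supNorm {n : ℕ} (f : Eucl n → ℝ) : ℝ := ⨆ x, f x

/-- `‖f‖_p = (∫ f^p)^(1/p)`. -/
def lpNorm {n : ℕ} (p : ℝ) (f : Eucl n → ℝ) : ℝ := (∫ x, f x ^ p) ^ (1 / p)

/-- `‖P_H f‖_{L¹(H)} = ∫_H sup_{z ∈ H⊥} f(y+z) dλ_H(y)`, the `L¹(H)`-norm of the
projection of `f` onto the subspace `H` (with the Lebesgue measure on `H` induced
by the Euclidean structure). -/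
def projL1 {n : ℕ} (f : Eucl n → ℝ) (H : Submodule ℝ (Eucl n)) : ℝ :=
  ∫ y : H, ⨆ z : Hᗮ, f ((y : Eucl n) + (z : Eucl n))

/-- `‖S_H f‖_{L¹(H)} = ∫_H f dλ_H`, the integral of the section `f|_H`. -/
def sectL1 {n : ℕ} (f : Eucl n → ℝ) (H : Submodule ℝ (Eucl n)) : ℝ :=
  ∫ y : H, f (y : Eucl n)

/-- The orthogonal group `O(n)` acting on `ℝⁿ`. -/
abbrev OG (n : ℕ) := Matrix.orthogonalGroup (Fin n) ℝ

instance (n : ℕ) : MeasurableSpace (OG n) := borel _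

/-- The volume `ω_d` of the Euclidean unit ball in `ℝ^d`. -/
def ballVol (d : ℕ) : ℝ := (volume (Metric.closedBall (0 : Eucl d) 1)).toReal

/-- The coordinate subspace `H₀ᵏ = span(e₁, …, e_k)` of `ℝⁿ`. -/
def stdSubspace (n k : ℕ) : Submodule ℝ (Eucl n) :=
  Submodule.span ℝ {v | ∃ i : Fin n, (i : ℕ) < k ∧ v = EuclideanSpace.single i 1}

/-- The quermassintegral `W_j(f)` of a function `f : ℝⁿ → [0,∞)`, defined for
`0 ≤ j ≤ n-1` (writing `k = n - j`) by
`W_{n−k}(f) = (ω_n/ω_k) ∫_{O(n)} ∫_{H₀ᵏ} sup_{z ∈ (H₀ᵏ)⊥} f(g(y+z)) dλ_k(y) dν(g)`,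
where `ν` is the Haar probability measure on `O(n)`, together with the convention
`W_n(f) = ω_n · ‖f‖_∞`.  (For `j = 0` the formula gives `W_0(f) = ‖f‖₁`.) -/
def querm {n : ℕ} (ν : Measure (OG n)) (f : Eucl n → ℝ) (j : ℕ) : ℝ :=
  if j = n then ballVol n * supNorm f
  else (ballVol n / ballVol (n - j)) *
    ∫ g : OG n,
      (∫ y : stdSubspace n (n - j), ⨆ z : (stdSubspace n (n - j))ᗮ,
        f ((Matrix.toEuclideanLin (g : Matrix (Fin n) (Fin n) ℝ))
            ((y : Eucl n) + (z : Eucl n)))) ∂ν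

open Filter Topology

open scoped ENNReal NNReal

/-!
For `F = f ∘ g` with `g ∈ O(d + 1)` random, the projection along the last axis satisfies
`2 ∫ P F ≤ ∫ |∂F/∂x_{d+1}|`, because an integrable function on a line climbs to its supremum and
comes back. Averaging over rotations replaces `|∂F/∂x_{d+1}|` by a constant multiple of `‖∇F‖`;
the constant is found by integrating against a Gaussian.

On the other hand, if `F((1 - t)x + tv) ≥ exp(-Nt) F(x)` for `‖v‖ ≤ 1`, differentiation at `t = 0`
gives `‖∇F(x)‖ ≤ N F(x) - ⟨∇F(x), x⟩`, whose integral is `(N + d + 1) ∫ F`. Together these bound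
the mean of `∫ P F` by `(N + d + 1) / (d + 1) · ω_d / ω_{d+1} · ∫ F`. The hypothesis on `F` passes
to `P F` with the same `N`, so the estimate can be iterated down to dimension `k`, where the
volumes of balls telescope.

Log-concavity and John's position give the hypothesis with `N = n`. Lipschitz regularization
makes `F` differentiable almost everywhere and costs a factor tending to `1`.
-/

section BallDecay

variable {E : Type*} [NormedAddCommGroup E] [NormedSpace ℝ E] [MeasureSpace E]

/-- The bounded integrable `φ ≥ 0` that decay at exponential rate at most `N` along every segment
ending in the unit ball; for log-concave functions on `ℝⁿ` in John's position, `N = n`. This is all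
that the argument uses of log-concavity, and projection preserves it with the same `N`. -/
structure BallDecay (N : ℝ) (φ : E → ℝ) : Prop where
  nonneg : ∀ x, 0 ≤ φ x
  bddAbove : BddAbove (Set.range φ)
  integrable : Integrable φ
  exp_mul_le : ∀ (x v : E) (t : ℝ), ‖v‖ ≤ 1 → 0 ≤ t → t ≤ 1 →
    Real.exp (-(N * t)) * φ x ≤ φ ((1 - t) • x + t • v)

namespace BallDecay

variable {N : ℝ} {φ : E → ℝ}

lemma neg_mul_le_slope (h : BallDecay N φ) (x : E) {v : E} (hv : ‖v‖ ≤ 1) {t : ℝ}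
    (ht₀ : 0 < t) (ht₁ : t ≤ 1) :
    -(N * φ x) ≤ t⁻¹ * (φ ((1 - t) • x + t • v) - φ x) := by
  have hexp := mul_le_mul_of_nonneg_right (Real.add_one_le_exp (-(N * t))) (h.nonneg x)
  rw [inv_mul_eq_div, le_div_iff₀ ht₀]
  linarith [h.exp_mul_le x v t hv ht₀.le ht₁]

lemma neg_mul_le_fderiv (h : BallDecay N φ) {x : E} (hd : DifferentiableAt ℝ φ x) {v : E}
    (hv : ‖v‖ ≤ 1) : -(N * φ x) ≤ fderiv ℝ φ x (v - x) := by
  refine ge_of_tendsto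
    (hd.hasFDerivAt.hasLineDerivAt (v - x)).tendsto_slope_zero_right ?_
  filter_upwards [Ioc_mem_nhdsGT zero_lt_one] with t ht
  have hslope := h.neg_mul_le_slope x hv ht.1 ht.2
  rwa [show (1 - t) • x + t • v = x + t • (v - x) by module] at hslope

/-- Comparing the bounds in the directions `v` and `-v`. -/
lemma norm_fderiv_le (h : BallDecay N φ) {x : E} (hd : DifferentiableAt ℝ φ x) :
    ‖fderiv ℝ φ x‖ ≤ fderiv ℝ φ x (-x) + N * φ x := by
  have habs (v : E) (hv : ‖v‖ ≤ 1) : |fderiv ℝ φ x v| ≤ fderiv ℝ φ x (-x) + N * φ x := by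
    have hpos := h.neg_mul_le_fderiv hd hv
    have hneg := h.neg_mul_le_fderiv hd (v := -v) (by rwa [norm_neg])
    rw [sub_eq_add_neg, map_add] at hpos hneg
    rw [map_neg _ v] at hneg
    exact abs_le.2 ⟨by linarith, by linarith⟩
  exact ContinuousLinearMap.opNorm_le_of_unit_norm
    ((abs_nonneg _).trans (habs 0 (by simp))) fun v hv => habs v hv.le

end BallDecay

lemma tendsto_slope_inv_one_sub_pow (d : ℕ) :
    Tendsto (fun t : ℝ => t⁻¹ * (((1 - t) ^ d)⁻¹ - 1)) (𝓝[>] 0) (𝓝 d) := by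
  have hderiv : HasDerivAt (fun t : ℝ => ((1 - t) ^ d)⁻¹) d 0 :=
    ((((hasDerivAt_id (0 : ℝ)).const_sub 1).pow d).inv (by simp)).congr_deriv (by simp)
  simpa using hderiv.tendsto_slope_zero_right

variable [BorelSpace E] [FiniteDimensional ℝ E] [(volume : Measure E).IsAddHaarMeasure]
  {N : ℝ} {φ : E → ℝ}

lemma integral_slope_smul (hφ : Integrable φ) {t : ℝ} (ht : t < 1) :
    ∫ x, t⁻¹ * (φ ((1 - t) • x) - φ x) =
      t⁻¹ * (((1 - t) ^ Module.finrank ℝ E)⁻¹ - 1) * ∫ x, φ x := by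
  have ht' : 0 < 1 - t := sub_pos.2 ht
  rw [integral_const_mul, integral_sub (hφ.comp_smul ht'.ne') hφ, Measure.integral_comp_smul,
    smul_eq_mul, abs_of_pos (inv_pos.2 (pow_pos ht' _))]
  ring

namespace BallDecay

lemma lintegral_slope_smul (h : BallDecay N φ) {t : ℝ} (ht₀ : 0 < t) (ht₁ : t < 1) :
    ∫⁻ x, ENNReal.ofReal (t⁻¹ * (φ ((1 - t) • x) - φ x) + N * φ x) =
      ENNReal.ofReal ((t⁻¹ * (((1 - t) ^ Module.finrank ℝ E)⁻¹ - 1) + N) * ∫ x, φ x) := by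
  have hslope : Integrable fun x => t⁻¹ * (φ ((1 - t) • x) - φ x) :=
    ((h.integrable.comp_smul (sub_pos.2 ht₁).ne').sub h.integrable).const_mul _
  have hN := h.integrable.const_mul N
  have hnonneg (x : E) : 0 ≤ t⁻¹ * (φ ((1 - t) • x) - φ x) + N * φ x := by
    have := h.neg_mul_le_slope x (v := 0) (by simp) ht₀ ht₁.le
    rw [smul_zero, add_zero] at this
    linarith
  rw [← ofReal_integral_eq_lintegral_ofReal (by exact hslope.add hN) (ae_of_all _ hnonneg),
    integral_add hslope hN, integral_slope_smul h.integrable ht₁, integral_const_mul, add_mul]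

/-- `‖∇φ(x)‖ ≤ ∇φ(x)(-x) + N φ(x)` is the limit of radial difference quotients, whose integrals
are computed by scaling. -/
lemma lintegral_enorm_fderiv_le (h : BallDecay N φ) {L : ℝ≥0} (hL : LipschitzWith L φ) :
    ∫⁻ x, ‖fderiv ℝ φ x‖ₑ ≤ ENNReal.ofReal ((N + Module.finrank ℝ E) * ∫ x, φ x) := by
  set g : ℝ → E → ℝ≥0∞ := fun t x =>
    ENNReal.ofReal (t⁻¹ * (φ ((1 - t) • x) - φ x) + N * φ x) with hg
  have hg_meas (t : ℝ) : Measurable (g t) := by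
    have := hL.continuous
    exact (ENNReal.continuous_ofReal.comp (by fun_prop)).measurable
  have hg_lim {x : E} (hx : DifferentiableAt ℝ φ x) : Tendsto (g · x) (𝓝[>] 0)
      (𝓝 (ENNReal.ofReal (fderiv ℝ φ x (-x) + N * φ x))) := by
    have hslope := (hx.hasFDerivAt.hasLineDerivAt (-x)).tendsto_slope_zero_right
    refine (ENNReal.tendsto_ofReal (hslope.add_const (N * φ x))).congr fun t => ?_
    rw [hg, smul_eq_mul, show x + t • -x = (1 - t) • x by module]
  calc ∫⁻ x, ‖fderiv ℝ φ x‖ₑ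
      ≤ ∫⁻ x, liminf (g · x) (𝓝[>] 0) := by
        refine lintegral_mono_ae ?_
        filter_upwards [hL.ae_differentiableAt] with x hx
        rw [(hg_lim hx).liminf_eq, ← ofReal_norm]
        exact ENNReal.ofReal_le_ofReal (h.norm_fderiv_le hx)
    _ ≤ liminf (fun t => ∫⁻ x, g t x) (𝓝[>] 0) := lintegral_liminf_le hg_meas
    _ = ENNReal.ofReal ((N + Module.finrank ℝ E) * ∫ x, φ x) := by
        rw [add_comm N]
        refine Tendsto.liminf_eq <| (ENNReal.tendsto_ofReal
          (((tendsto_slope_inv_one_sub_pow _).add_const N).mul_const _)).congr' ?_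
        filter_upwards [Ioo_mem_nhdsGT zero_lt_one] with t ht
        exact (h.lintegral_slope_smul ht.1 ht.2).symm

end BallDecay

end BallDecay

section OneDim

lemma exists_mem_lt_of_integrable {α : Type*} [MeasurableSpace α] {μ : Measure α} {f : α → ℝ}
    (hf : Integrable f μ) {s : Set α} (hs : μ s = ∞) {ε : ℝ} (hε : 0 < ε) :
    ∃ x ∈ s, f x < ε := by
  by_contra! hge
  exact (hs ▸ measure_mono (show s ⊆ {x | ε ≤ f x} from hge)).not_gt (hf.measure_ge_lt_top hε)

lemma ofReal_abs_sub_le_lintegral_deriv {ψ : ℝ → ℝ} {L : ℝ≥0}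
    (hL : LipschitzWith L ψ) {a b : ℝ} (hab : a ≤ b) :
    ENNReal.ofReal |ψ b - ψ a| ≤ ∫⁻ r in Set.Ioc a b, ‖deriv ψ r‖ₑ := by
  have hac : AbsolutelyContinuousOnInterval ψ a b :=
    (hL.lipschitzOnWith (s := Set.uIcc a b)).absolutelyContinuousOnInterval
  rw [← hac.integral_deriv_eq_sub, intervalIntegral.integral_of_le hab, ← Real.norm_eq_abs,
    ofReal_norm]
  exact enorm_integral_le_lintegral_enorm _

/-- An integrable function is small somewhere on both sides of `x`, so its total variation pays
for climbing to `ψ x` and for coming back down. -/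
lemma ofReal_two_mul_le_lintegral_deriv {ψ : ℝ → ℝ} {L : ℝ≥0} (hL : LipschitzWith L ψ)
    (hψ : Integrable ψ) (x : ℝ) : ENNReal.ofReal (2 * ψ x) ≤ ∫⁻ r, ‖deriv ψ r‖ₑ := by
  refine ENNReal.le_of_forall_pos_le_add fun ε hε _ => ?_
  have hε₂ : 0 < (ε : ℝ) / 2 := by positivity
  obtain ⟨a, ha : a < x, hψa⟩ := exists_mem_lt_of_integrable hψ (Real.volume_Iio (a := x)) hε₂
  obtain ⟨b, hb : x < b, hψb⟩ := exists_mem_lt_of_integrable hψ (Real.volume_Ioi (a := x)) hε₂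
  calc ENNReal.ofReal (2 * ψ x)
      ≤ ENNReal.ofReal (|ψ x - ψ a| + |ψ b - ψ x| + ε) := by
        refine ENNReal.ofReal_le_ofReal ?_
        linarith [le_abs_self (ψ x - ψ a), neg_abs_le (ψ b - ψ x)]
    _ = ENNReal.ofReal |ψ x - ψ a| + ENNReal.ofReal |ψ b - ψ x| + ε := by
        rw [ENNReal.ofReal_add (by positivity) (by positivity),
          ENNReal.ofReal_add (by positivity) (by positivity), ENNReal.ofReal_coe_nnreal]
    _ ≤ (∫⁻ r in Set.Ioc a x, ‖deriv ψ r‖ₑ) + (∫⁻ r in Set.Ioc x b, ‖deriv ψ r‖ₑ) + ε := by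
        gcongr
        exacts [ofReal_abs_sub_le_lintegral_deriv hL ha.le,
          ofReal_abs_sub_le_lintegral_deriv hL hb.le]
    _ ≤ (∫⁻ r, ‖deriv ψ r‖ₑ) + ε := by
        rw [← lintegral_union measurableSet_Ioc (Set.Ioc_disjoint_Ioc_of_le le_rfl)]
        exact add_le_add_left (setLIntegral_le_lintegral _ _) _

lemma ofReal_two_mul_iSup_le_lintegral_deriv {ψ : ℝ → ℝ} {L : ℝ≥0} (hL : LipschitzWith L ψ)
    (hψ : Integrable ψ) : ENNReal.ofReal (2 * ⨆ x, ψ x) ≤ ∫⁻ r, ‖deriv ψ r‖ₑ := by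
  obtain htop | hfin := eq_or_ne (∫⁻ r, ‖deriv ψ r‖ₑ) ∞
  · exact htop ▸ le_top
  · rw [ENNReal.ofReal_le_iff_le_toReal hfin, Real.mul_iSup_of_nonneg two_pos.le]
    exact ciSup_le fun x => (ENNReal.ofReal_le_iff_le_toReal hfin).1
      (ofReal_two_mul_le_lintegral_deriv hL hψ x)

end OneDim

namespace Eucl

variable {d : ℕ}

/-- The point `(y, r)` of `ℝᵈ⁺¹ = ℝᵈ × ℝ`. -/
def snoc (y : Eucl d) (r : ℝ) : Eucl (d + 1) :=
  WithLp.toLp 2 (Fin.snoc (α := fun _ => ℝ) y.ofLp r)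

/-- The first `d` coordinates of a point of `ℝᵈ⁺¹`. -/
def init (x : Eucl (d + 1)) : Eucl d := WithLp.toLp 2 (Fin.init x.ofLp)

/-- The last vector of the standard basis of `ℝᵈ⁺¹`. -/
abbrev lastVec (d : ℕ) : Eucl (d + 1) := EuclideanSpace.single (Fin.last d) 1

@[simp] lemma snoc_castSucc (y : Eucl d) (r : ℝ) (i : Fin d) : snoc y r i.castSucc = y i := by
  simp [snoc]

@[simp] lemma snoc_last (y : Eucl d) (r : ℝ) : snoc y r (Fin.last d) = r := by
  simp [snoc]

@[simp] lemma init_apply (x : Eucl (d + 1)) (i : Fin d) : init x i = x i.castSucc := rfl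

lemma ext_last {x x' : Eucl (d + 1)} (hinit : ∀ i : Fin d, x i.castSucc = x' i.castSucc)
    (hlast : x (Fin.last d) = x' (Fin.last d)) : x = x' := by
  ext i
  exact Fin.lastCases hlast hinit i

@[simp] lemma init_snoc (y : Eucl d) (r : ℝ) : init (snoc y r) = y := by
  ext i
  simp

@[simp] lemma snoc_init_last (x : Eucl (d + 1)) : snoc (init x) (x (Fin.last d)) = x := by
  apply ext_last <;> simp

lemma snoc_add (y y' : Eucl d) (r r' : ℝ) : snoc (y + y') (r + r') = snoc y r + snoc y' r' := by
  apply ext_last <;> simp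

lemma snoc_smul (c : ℝ) (y : Eucl d) (r : ℝ) : snoc (c • y) (c * r) = c • snoc y r := by
  apply ext_last <;> simp

lemma snoc_eq_add_smul_lastVec (y : Eucl d) (r : ℝ) : snoc y r = snoc y 0 + r • lastVec d := by
  apply ext_last <;> simp

lemma norm_snoc_sq (y : Eucl d) (r : ℝ) : ‖snoc y r‖ ^ 2 = ‖y‖ ^ 2 + r ^ 2 := by
  simp [EuclideanSpace.norm_sq_eq, Fin.sum_univ_castSucc]

lemma norm_snoc_zero (y : Eucl d) : ‖snoc y 0‖ = ‖y‖ := by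
  simp [EuclideanSpace.norm_eq, Fin.sum_univ_castSucc]

lemma isometry_snoc_right (y : Eucl d) : Isometry (snoc y) :=
  Isometry.of_dist_eq fun r r' => by
    simp [EuclideanSpace.dist_eq, Fin.sum_univ_castSucc, Real.sqrt_sq_eq_abs, Real.dist_eq]

lemma isometry_snoc_left (r : ℝ) : Isometry fun y : Eucl d => snoc y r :=
  Isometry.of_dist_eq fun y y' => by
    simp [EuclideanSpace.dist_eq, Fin.sum_univ_castSucc]

lemma continuous_snoc : Continuous fun p : Eucl d × ℝ => snoc p.1 p.2 := by
  refine (PiLp.continuous_toLp 2 _).comp (continuous_pi fun i => ?_)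
  induction i using Fin.lastCases with
  | last => simpa only [Fin.snoc_last] using continuous_snd
  | cast i => simp only [Fin.snoc_castSucc]; fun_prop

lemma measurePreserving_snoc (d : ℕ) :
    MeasurePreserving (fun p : Eucl d × ℝ => snoc p.1 p.2) (volume.prod volume) volume := by
  have hswap : MeasurePreserving (fun p : Eucl d × ℝ => (p.2, p.1.ofLp))
      (volume.prod volume) (volume.prod volume) :=
    ((MeasurePreserving.id volume).prod (PiLp.volume_preserving_ofLp (Fin d))).comp
      Measure.measurePreserving_swap
  have hinsert := (PiLp.volume_preserving_toLp (Fin (d + 1))).comp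
    (volume_preserving_piFinSuccAbove (fun _ => ℝ) (Fin.last d)).symm
  refine (hinsert.comp hswap).congr continuous_snoc.measurable (ae_of_all _ fun p => ?_)
  simp [snoc, MeasurableEquiv.piFinSuccAbove, Fin.insertNthEquiv, Fin.insertNth_last']

lemma lintegral_eq_lintegral_lintegral_snoc {F : Eucl (d + 1) → ℝ≥0∞} (hF : Measurable F) :
    ∫⁻ x, F x = ∫⁻ y : Eucl d, ∫⁻ r : ℝ, F (snoc y r) := by
  rw [← (measurePreserving_snoc d).lintegral_comp hF,
    lintegral_prod (fun p : Eucl d × ℝ => F (snoc p.1 p.2))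
      (hF.comp continuous_snoc.measurable).aemeasurable]

/-- The isometry of `ℝᵈ⁺¹` acting as `h` on the first `d` coordinates and fixing the last one. -/
def extendIsometry (h : Eucl d ≃ₗᵢ[ℝ] Eucl d) : Eucl (d + 1) ≃ₗᵢ[ℝ] Eucl (d + 1) :=
  LinearIsometry.toLinearIsometryEquiv
    { toFun x := snoc (h (init x)) (x (Fin.last d))
      map_add' x x' := by rw [← snoc_add, ← map_add]; rfl
      map_smul' c x := by rw [RingHom.id_apply, ← snoc_smul, ← map_smul]; rfl
      norm_map' x := by
        change ‖snoc (h (init x)) (x (Fin.last d))‖ = ‖x‖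
        rw [← sq_eq_sq₀ (norm_nonneg _) (norm_nonneg _), norm_snoc_sq, h.norm_map,
          ← norm_snoc_sq, snoc_init_last] } rfl

lemma extendIsometry_snoc (h : Eucl d ≃ₗᵢ[ℝ] Eucl d) (y : Eucl d) (r : ℝ) :
    extendIsometry h (snoc y r) = snoc (h y) r := by
  change snoc (h (init (snoc y r))) (snoc y r (Fin.last d)) = snoc (h y) r
  rw [init_snoc, snoc_last]

lemma exists_isometry_lastVec_eq {θ : Eucl (d + 1)} (hθ : ‖θ‖ = 1) :
    ∃ h : Eucl (d + 1) ≃ₗᵢ[ℝ] Eucl (d + 1), h (lastVec d) = θ :=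
  ⟨_, Submodule.reflection_sub (by simpa using hθ.symm)⟩

lemma exists_isometry_norm_smul_eq (v : Eucl (d + 1)) :
    ∃ h : Eucl (d + 1) ≃ₗᵢ[ℝ] Eucl (d + 1), ‖v‖ • h (lastVec d) = v := by
  obtain rfl | hv := eq_or_ne v 0
  · exact ⟨.refl ℝ _, by simp⟩
  · obtain ⟨h, hh⟩ := exists_isometry_lastVec_eq (norm_smul_inv_norm (𝕜 := ℝ) hv)
    exact ⟨h, by rw [hh]; simp [smul_smul, hv]⟩

end Eucl

section ProjLast

variable {d : ℕ} {N : ℝ} {L : ℝ≥0} {φ : Eucl (d + 1) → ℝ}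

/-- The projection of `φ` along the last coordinate axis. -/
def projLast (φ : Eucl (d + 1) → ℝ) (y : Eucl d) : ℝ := ⨆ r : ℝ, φ (Eucl.snoc y r)

lemma bddAbove_range_snoc (hφ : BddAbove (Set.range φ)) (y : Eucl d) :
    BddAbove (Set.range fun r => φ (Eucl.snoc y r)) :=
  hφ.mono (Set.range_comp_subset_range (Eucl.snoc y) φ)

lemma le_projLast (hφ : BddAbove (Set.range φ)) (y : Eucl d) (r : ℝ) :
    φ (Eucl.snoc y r) ≤ projLast φ y :=
  le_ciSup (bddAbove_range_snoc hφ y) r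

lemma bddAbove_range_projLast (hφ : BddAbove (Set.range φ)) :
    BddAbove (Set.range (projLast φ)) := by
  obtain ⟨M, hM⟩ := hφ
  exact ⟨M, Set.forall_mem_range.2 fun y => ciSup_le fun r => hM (Set.mem_range_self _)⟩

lemma projLast_comp_extendIsometry (φ : Eucl (d + 1) → ℝ) (h : Eucl d ≃ₗᵢ[ℝ] Eucl d) :
    projLast (φ ∘ Eucl.extendIsometry h) = projLast φ ∘ h := by
  funext y
  simp only [projLast, Function.comp_apply, Eucl.extendIsometry_snoc]

lemma lipschitzWith_projLast (hL : LipschitzWith L φ) (hφ : BddAbove (Set.range φ)) :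
    LipschitzWith L (projLast φ) := by
  refine LipschitzWith.of_le_add_mul L fun y y' => ciSup_le fun r => ?_
  calc φ (Eucl.snoc y r) ≤ φ (Eucl.snoc y' r) + L * dist (Eucl.snoc y r) (Eucl.snoc y' r) :=
        hL.le_add_mul _ _
    _ ≤ _ := by
        rw [(Eucl.isometry_snoc_left r).dist_eq]
        gcongr
        exact le_projLast hφ y' r

lemma deriv_comp_snoc {y : Eucl d} {r : ℝ} (hd : DifferentiableAt ℝ φ (Eucl.snoc y r)) :
    deriv (fun s => φ (Eucl.snoc y s)) r = fderiv ℝ φ (Eucl.snoc y r) (Eucl.lastVec d) := by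
  have hsnoc : HasDerivAt (Eucl.snoc y) (Eucl.lastVec d) r := by
    rw [funext (Eucl.snoc_eq_add_smul_lastVec y)]
    simpa using ((hasDerivAt_id r).smul_const (Eucl.lastVec d)).const_add (Eucl.snoc y 0)
  exact (hd.hasFDerivAt.comp_hasDerivAt r hsnoc).deriv

lemma two_mul_lintegral_projLast_le (hL : LipschitzWith L φ) (hφ : Integrable φ) :
    2 * ∫⁻ y, ENNReal.ofReal (projLast φ y) ≤ ∫⁻ x, ‖fderiv ℝ φ x (Eucl.lastVec d)‖ₑ := by
  have hsnoc := Eucl.measurePreserving_snoc d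
  have hdiff : ∀ᵐ y : Eucl d, ∀ᵐ r : ℝ, DifferentiableAt ℝ φ (Eucl.snoc y r) :=
    Measure.ae_ae_of_ae_prod (hsnoc.quasiMeasurePreserving.ae hL.ae_differentiableAt)
  have hint : ∀ᵐ y : Eucl d, Integrable fun r : ℝ => φ (Eucl.snoc y r) :=
    (hsnoc.integrable_comp_of_integrable hφ).prod_right_ae
  rw [Eucl.lintegral_eq_lintegral_lintegral_snoc (measurable_fderiv_apply_const ℝ φ _).enorm,
    ← lintegral_const_mul' _ _ ENNReal.ofNat_ne_top]
  refine lintegral_mono_ae ?_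
  filter_upwards [hdiff, hint] with y hdiff_y hint_y
  calc 2 * ENNReal.ofReal (projLast φ y) = ENNReal.ofReal (2 * projLast φ y) := by
        rw [ENNReal.ofReal_mul two_pos.le, ENNReal.ofReal_ofNat]
    _ ≤ ∫⁻ r, ‖deriv (fun s => φ (Eucl.snoc y s)) r‖ₑ :=
        ofReal_two_mul_iSup_le_lintegral_deriv
          (mul_one L ▸ hL.comp (Eucl.isometry_snoc_right y).lipschitz) hint_y
    _ = ∫⁻ r, ‖fderiv ℝ φ (Eucl.snoc y r) (Eucl.lastVec d)‖ₑ :=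
        lintegral_congr_ae (hdiff_y.mono fun r hr => by simp only [deriv_comp_snoc hr])

namespace BallDecay

lemma projLast_nonneg (h : BallDecay N φ) (y : Eucl d) : 0 ≤ projLast φ y :=
  Real.iSup_nonneg fun _ => h.nonneg _

lemma integrable_projLast (h : BallDecay N φ) (hL : LipschitzWith L φ) :
    Integrable (projLast φ) := by
  refine ⟨(lipschitzWith_projLast hL h.bddAbove).continuous.aestronglyMeasurable, ?_⟩
  rw [hasFiniteIntegral_iff_ofReal (ae_of_all _ h.projLast_nonneg)]
  calc ∫⁻ y, ENNReal.ofReal (projLast φ y) ≤ 2 * ∫⁻ y, ENNReal.ofReal (projLast φ y) :=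
        le_mul_of_one_le_left zero_le one_le_two
    _ ≤ ∫⁻ x, ‖fderiv ℝ φ x (Eucl.lastVec d)‖ₑ := two_mul_lintegral_projLast_le hL h.integrable
    _ ≤ ∫⁻ x, ‖fderiv ℝ φ x‖ₑ := lintegral_mono fun x =>
        enorm_le_iff_norm_le.2 (by simpa using (fderiv ℝ φ x).le_opNorm (Eucl.lastVec d))
    _ < ∞ := (h.lintegral_enorm_fderiv_le hL).trans_lt ENNReal.ofReal_lt_top

protected lemma projLast (h : BallDecay N φ) (hL : LipschitzWith L φ) :
    BallDecay N (projLast φ) where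
  nonneg := h.projLast_nonneg
  bddAbove := bddAbove_range_projLast h.bddAbove
  integrable := h.integrable_projLast hL
  exp_mul_le x v t hv ht₀ ht₁ := by
    rw [projLast, Real.mul_iSup_of_nonneg (Real.exp_pos _).le]
    refine ciSup_le fun r => ?_
    have hdecay := h.exp_mul_le (Eucl.snoc x r) (Eucl.snoc v 0) t (by rwa [Eucl.norm_snoc_zero])
      ht₀ ht₁
    rw [← Eucl.snoc_smul, ← Eucl.snoc_smul, ← Eucl.snoc_add] at hdecay
    exact hdecay.trans (le_projLast h.bddAbove _ _)

end BallDecay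

end ProjLast

section Gaussian

variable {d : ℕ}

lemma lintegral_ofReal_of_integral_pos {α : Type*} [MeasurableSpace α] {μ : Measure α}
    {f : α → ℝ} (hf : 0 ≤ f) (hpos : 0 < ∫ x, f x ∂μ) :
    ∫⁻ x, ENNReal.ofReal (f x) ∂μ = ENNReal.ofReal (∫ x, f x ∂μ) :=
  (ofReal_integral_eq_lintegral_ofReal (.of_integral_ne_zero hpos.ne') (ae_of_all _ hf)).symm

lemma ballVol_pos (d : ℕ) : 0 < ballVol d :=
  ENNReal.toReal_pos (Metric.measure_closedBall_pos _ _ one_pos).ne' measure_closedBall_lt_top.ne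

lemma measureReal_unitBall (d : ℕ) :
    (volume : Measure (Eucl d)).real (Metric.ball 0 1) = ballVol d := by
  rw [ballVol, Measure.addHaar_unitClosedBall_eq_addHaar_unitBall, Measure.real]

lemma Gamma_half_add_one_pos (d : ℕ) : 0 < Real.Gamma (d / 2 + 1) :=
  Real.Gamma_pos_of_pos (by positivity)

lemma integral_exp_neg_norm_sq (d : ℕ) :
    ∫ v : Eucl d, Real.exp (-‖v‖ ^ 2) = ballVol d * Real.Gamma (d / 2 + 1) := by
  have hball := measure_unitBall_eq_integral_div_gamma (volume : Measure (Eucl d)) two_pos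
  have hnonneg : 0 ≤ ∫ v : Eucl d, Real.exp (-‖v‖ ^ 2) :=
    integral_nonneg fun _ => (Real.exp_pos _).le
  simp only [finrank_euclideanSpace_fin, Real.rpow_two] at hball
  rw [← measureReal_unitBall, Measure.real, hball, ENNReal.toReal_ofReal
    (div_nonneg hnonneg (Gamma_half_add_one_pos d).le),
    div_mul_cancel₀ _ (Gamma_half_add_one_pos d).ne']

lemma integral_Ioi_pow_mul_mul_exp_neg_sq (d : ℕ) :
    ∫ r in Set.Ioi (0 : ℝ), r ^ d * (r * Real.exp (-r ^ 2)) = Real.Gamma (d / 2 + 1) / 2 := by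
  have hGamma := integral_rpow_mul_exp_neg_rpow (p := 2) (q := (d + 1 : ℕ)) two_pos
    (by linarith [(d + 1).cast_nonneg (α := ℝ)])
  simp only [Real.rpow_natCast, Real.rpow_two] at hGamma
  simp only [← mul_assoc, ← pow_succ, hGamma]
  push_cast
  ring_nf

lemma integral_norm_mul_exp_neg_norm_sq (d : ℕ) :
    ∫ v : Eucl (d + 1), ‖v‖ * Real.exp (-‖v‖ ^ 2) =
      (d + 1) * ballVol (d + 1) * (Real.Gamma (d / 2 + 1) / 2) := by
  rw [integral_fun_norm_addHaar volume fun r => r * Real.exp (-r ^ 2), measureReal_unitBall,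
    finrank_euclideanSpace_fin, Nat.add_sub_cancel]
  simp only [smul_eq_mul, integral_Ioi_pow_mul_mul_exp_neg_sq, nsmul_eq_mul]
  push_cast
  ring

lemma integral_abs_mul_exp_neg_sq : ∫ r : ℝ, |r| * Real.exp (-r ^ 2) = 1 := by
  have hradial := integral_Ioi_pow_mul_mul_exp_neg_sq 0
  simp only [pow_zero, one_mul, Nat.cast_zero, zero_div, zero_add, Real.Gamma_one] at hradial
  have habs := integral_comp_abs (f := fun r => r * Real.exp (-r ^ 2))
  simp only [sq_abs] at habs
  rw [habs, hradial, mul_one_div_cancel two_ne_zero]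

/-- The Gaussian measure `exp (-‖v‖²) dv` on `ℝᵈ` (not normalized), used as a rotation-invariant
weight on directions. -/
def gaussMeasure (d : ℕ) : Measure (Eucl d) :=
  volume.withDensity fun v => ENNReal.ofReal (Real.exp (-‖v‖ ^ 2))

instance : SFinite (gaussMeasure d) := by
  unfold gaussMeasure
  infer_instance

lemma lintegral_gaussMeasure {g : Eucl d → ℝ≥0∞} (hg : Measurable g) :
    ∫⁻ v, g v ∂gaussMeasure d = ∫⁻ v, g v * ENNReal.ofReal (Real.exp (-‖v‖ ^ 2)) := by
  rw [gaussMeasure, lintegral_withDensity_eq_lintegral_mul _ (by fun_prop) hg]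
  simp only [Pi.mul_apply, mul_comm]

lemma measurePreserving_gaussMeasure (h : Eucl d ≃ₗᵢ[ℝ] Eucl d) :
    MeasurePreserving h (gaussMeasure d) (gaussMeasure d) := by
  refine ⟨h.continuous.measurable, Measure.ext_of_lintegral _ fun g hg => ?_⟩
  rw [lintegral_map hg h.continuous.measurable,
    lintegral_gaussMeasure (g := fun v => g (h v)) (hg.comp h.continuous.measurable),
    lintegral_gaussMeasure hg, ← h.measurePreserving.lintegral_comp
      (f := fun v => g v * ENNReal.ofReal (Real.exp (-‖v‖ ^ 2))) (by fun_prop)]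
  simp only [h.norm_map]

lemma lintegral_enorm_gaussMeasure (d : ℕ) :
    ∫⁻ v, ‖v‖ₑ ∂gaussMeasure (d + 1) =
      ENNReal.ofReal ((d + 1) * ballVol (d + 1) * (Real.Gamma (d / 2 + 1) / 2)) := by
  have hpos : 0 < (d + 1) * ballVol (d + 1) * (Real.Gamma (d / 2 + 1) / 2) :=
    mul_pos (mul_pos (by positivity) (ballVol_pos _)) (half_pos (Gamma_half_add_one_pos d))
  rw [← integral_norm_mul_exp_neg_norm_sq] at hpos ⊢
  rw [lintegral_gaussMeasure measurable_enorm, ← lintegral_ofReal_of_integral_pos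
    (fun _ => by positivity) hpos]
  simp only [ENNReal.ofReal_mul (norm_nonneg _), ofReal_norm]

lemma lintegral_enorm_last_gaussMeasure (d : ℕ) :
    ∫⁻ v, ‖v (Fin.last d)‖ₑ ∂gaussMeasure (d + 1) =
      ENNReal.ofReal (ballVol d * Real.Gamma (d / 2 + 1)) := by
  have hline : ∫⁻ r : ℝ, ‖r‖ₑ * ENNReal.ofReal (Real.exp (-r ^ 2)) = 1 := by
    have h := lintegral_ofReal_of_integral_pos (f := fun r : ℝ => |r| * Real.exp (-r ^ 2))
      (μ := volume) (fun _ => by positivity) (by rw [integral_abs_mul_exp_neg_sq]; exact one_pos)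
    rw [integral_abs_mul_exp_neg_sq, ENNReal.ofReal_one] at h
    simpa only [ENNReal.ofReal_mul (abs_nonneg _), ← Real.enorm_eq_ofReal_abs] using h
  have hpos : 0 < ballVol d * Real.Gamma (d / 2 + 1) :=
    mul_pos (ballVol_pos d) (Gamma_half_add_one_pos d)
  rw [← integral_exp_neg_norm_sq] at hpos ⊢
  rw [lintegral_gaussMeasure (by fun_prop), ← lintegral_ofReal_of_integral_pos
    (fun _ => (Real.exp_pos _).le) hpos,
    Eucl.lintegral_eq_lintegral_lintegral_snoc (by fun_prop)]
  refine lintegral_congr fun y => ?_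
  simp only [Eucl.snoc_last, Eucl.norm_snoc_sq, neg_add, Real.exp_add,
    ENNReal.ofReal_mul (Real.exp_pos _).le, mul_left_comm ‖_‖ₑ]
  rw [lintegral_const_mul' _ _ ENNReal.ofReal_ne_top, hline, mul_one]

lemma ballVol_mul_lintegral_last_gaussMeasure (d : ℕ) :
    ENNReal.ofReal ((d + 1) * ballVol (d + 1)) *
        ∫⁻ v, ‖v (Fin.last d)‖ₑ ∂gaussMeasure (d + 1) =
      2 * ENNReal.ofReal (ballVol d) * ∫⁻ v, ‖v‖ₑ ∂gaussMeasure (d + 1) := by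
  have hball := ballVol_pos d
  have hball' := ballVol_pos (d + 1)
  rw [lintegral_enorm_gaussMeasure, lintegral_enorm_last_gaussMeasure, ← ENNReal.ofReal_ofNat 2,
    ← ENNReal.ofReal_mul (by positivity), ← ENNReal.ofReal_mul (by positivity),
    ← ENNReal.ofReal_mul (by positivity)]
  congr 1
  ring

/-- The Riesz representative of `l` can be rotated to a multiple of the last basis vector. -/
lemma lintegral_enorm_apply_gaussMeasure (l : Eucl (d + 1) →L[ℝ] ℝ) :
    ∫⁻ v, ‖l v‖ₑ ∂gaussMeasure (d + 1) =
      ‖l‖ₑ * ∫⁻ v, ‖v (Fin.last d)‖ₑ ∂gaussMeasure (d + 1) := by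
  obtain ⟨ξ, rfl⟩ := (InnerProductSpace.toDual ℝ (Eucl (d + 1))).surjective l
  obtain ⟨h, hξ⟩ := Eucl.exists_isometry_norm_smul_eq ξ
  have happly (v : Eucl (d + 1)) :
      InnerProductSpace.toDual ℝ (Eucl (d + 1)) ξ (h v) = ‖ξ‖ * v (Fin.last d) := by
    rw [InnerProductSpace.toDual_apply_apply, ← hξ, real_inner_smul_left, h.inner_map_map, hξ,
      EuclideanSpace.inner_single_left, map_one, one_mul]
  rw [← (measurePreserving_gaussMeasure h).lintegral_comp (by fun_prop),
    LinearIsometryEquiv.enorm_map, ← lintegral_const_mul' _ _ enorm_ne_top]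
  simp only [happly, enorm_mul, enorm_norm]

end Gaussian

section AbsDirDeriv

variable {E : Type*} [NormedAddCommGroup E] [NormedSpace ℝ E] {φ : E → ℝ}

/-- The upper absolute derivative of `φ` at `x` in the direction `v`. The upper limit is taken
along a sequence, so that it is measurable in any parameter on which `φ` depends measurably. -/
def absDirDeriv (φ : E → ℝ) (x v : E) : ℝ≥0∞ :=
  limsup (fun n : ℕ => ‖((n : ℝ) + 1) • (φ (x + ((n : ℝ) + 1)⁻¹ • v) - φ x)‖ₑ) atTop

lemma absDirDeriv_eq_enorm_fderiv {x : E} (hd : DifferentiableAt ℝ φ x) (v : E) :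
    absDirDeriv φ x v = ‖fderiv ℝ φ x v‖ₑ := by
  have hzero : Tendsto (fun n : ℕ => ((n : ℝ) + 1)⁻¹) atTop (𝓝[>] 0) :=
    tendsto_inv_atTop_nhdsGT_zero.comp
      (tendsto_atTop_add_const_right _ 1 tendsto_natCast_atTop_atTop)
  have hslope := (hd.hasFDerivAt.hasLineDerivAt v).tendsto_slope_zero_right.comp hzero
  simp only [Function.comp_def, inv_inv] at hslope
  exact hslope.enorm.limsup_eq

lemma absDirDeriv_comp_isometry (h : E ≃ₗᵢ[ℝ] E) (x v : E) :
    absDirDeriv (φ ∘ h) x v = absDirDeriv φ (h x) (h v) := by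
  simp only [absDirDeriv, Function.comp_apply, map_add, map_smul]

variable [MeasureSpace E] [BorelSpace E] [FiniteDimensional ℝ E]
  [(volume : Measure E).IsAddHaarMeasure] {L : ℝ≥0}

lemma lintegral_absDirDeriv (hL : LipschitzWith L φ) (v : E) :
    ∫⁻ x, absDirDeriv φ x v = ∫⁻ x, ‖fderiv ℝ φ x v‖ₑ :=
  lintegral_congr_ae (hL.ae_differentiableAt.mono fun _ hx => absDirDeriv_eq_enorm_fderiv hx v)

lemma lintegral_absDirDeriv_smul (hL : LipschitzWith L φ) (c : ℝ) (v : E) :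
    ∫⁻ x, absDirDeriv φ x (c • v) = ‖c‖ₑ * ∫⁻ x, absDirDeriv φ x v := by
  simp only [lintegral_absDirDeriv hL, map_smul, smul_eq_mul, enorm_mul]
  exact lintegral_const_mul' _ _ enorm_ne_top

end AbsDirDeriv

section RotInvFamily

variable {N : ℝ} {L : ℝ≥0} {Ω : Type*} [MeasurableSpace Ω] {ν : Measure Ω} {d : ℕ}

/-- A random function on `ℝᵈ` whose distribution is invariant under linear isometries and whose
realizations satisfy `BallDecay N` and are Lipschitz with constant `L`. The example to keep in
mind is `g ↦ F ∘ g` for Haar-distributed `g ∈ O(d)`. -/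
structure RotInvFamily (N : ℝ) (L : ℝ≥0) (ν : Measure Ω) (φ : Ω → Eucl d → ℝ) : Prop where
  ballDecay : ∀ ω, BallDecay N (φ ω)
  lipschitzWith : ∀ ω, LipschitzWith L (φ ω)
  measurable : Measurable fun p : Ω × Eucl d => φ p.1 p.2
  exists_eq_comp : ∀ h : Eucl d ≃ₗᵢ[ℝ] Eucl d,
    ∃ T : Ω → Ω, MeasurePreserving T ν ν ∧ ∀ ω, φ (T ω) = φ ω ∘ h

/-- The mean of `∫ φ` over a random `φ`. -/
def meanIntegral (ν : Measure Ω) (φ : Ω → Eucl d → ℝ) : ℝ≥0∞ :=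
  ∫⁻ ω, ∫⁻ x, ENNReal.ofReal (φ ω x) ∂volume ∂ν

/-- The mean of the total variation in the direction `v` of a random `φ`. -/
def meanVariation (ν : Measure Ω) (φ : Ω → Eucl d → ℝ) (v : Eucl d) : ℝ≥0∞ :=
  ∫⁻ ω, ∫⁻ x, absDirDeriv (φ ω) x v ∂volume ∂ν

namespace RotInvFamily

lemma measurable_absDirDeriv {φ : Ω → Eucl d → ℝ} (hφ : RotInvFamily N L ν φ) :
    Measurable fun q : (Ω × Eucl d) × Eucl d => absDirDeriv (φ q.1.1) q.1.2 q.2 := by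
  refine Measurable.limsup fun n => ?_
  have hshift : Measurable fun q : (Ω × Eucl d) × Eucl d =>
      φ q.1.1 (q.1.2 + ((n : ℝ) + 1)⁻¹ • q.2) :=
    hφ.measurable.comp (by fun_prop : Measurable fun q : (Ω × Eucl d) × Eucl d =>
      (q.1.1, q.1.2 + ((n : ℝ) + 1)⁻¹ • q.2))
  have hbase : Measurable fun q : (Ω × Eucl d) × Eucl d => φ q.1.1 q.1.2 :=
    hφ.measurable.comp measurable_fst
  exact ((hshift.sub hbase).const_smul ((n : ℝ) + 1)).enorm

variable {φ : Ω → Eucl (d + 1) → ℝ}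

lemma meanVariation_isometry (hφ : RotInvFamily N L ν φ)
    (h : Eucl (d + 1) ≃ₗᵢ[ℝ] Eucl (d + 1)) (v : Eucl (d + 1)) :
    meanVariation ν φ (h v) = meanVariation ν φ v := by
  obtain ⟨T, hT, hφT⟩ := hφ.exists_eq_comp h
  have hmeas : Measurable fun ω => ∫⁻ x, absDirDeriv (φ ω) x v :=
    (hφ.measurable_absDirDeriv.comp (f := fun p : Ω × Eucl (d + 1) => (p, v))
      (by fun_prop)).lintegral_prod_right'
  rw [meanVariation, meanVariation, ← hT.lintegral_comp hmeas]
  refine lintegral_congr fun ω => ?_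
  simp only [hφT, absDirDeriv_comp_isometry]
  exact (h.measurePreserving.lintegral_comp (hφ.measurable_absDirDeriv.comp
    (f := fun x : Eucl (d + 1) => ((ω, x), h v)) (by fun_prop))).symm

lemma meanVariation_eq (hφ : RotInvFamily N L ν φ) (v : Eucl (d + 1)) :
    meanVariation ν φ v = ‖v‖ₑ * meanVariation ν φ (Eucl.lastVec d) := by
  obtain ⟨h, hv⟩ := Eucl.exists_isometry_norm_smul_eq v
  calc meanVariation ν φ v = meanVariation ν φ (‖v‖ • h (Eucl.lastVec d)) := by rw [hv]
    _ = ‖v‖ₑ * meanVariation ν φ (h (Eucl.lastVec d)) := by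
        simp only [meanVariation, fun ω => lintegral_absDirDeriv_smul (hφ.lipschitzWith ω),
          enorm_norm]
        exact lintegral_const_mul' _ _ enorm_ne_top
    _ = ‖v‖ₑ * meanVariation ν φ (Eucl.lastVec d) := by rw [hφ.meanVariation_isometry]

lemma lintegral_meanVariation [SFinite ν] (hφ : RotInvFamily N L ν φ)
    (γ : Measure (Eucl (d + 1))) [SFinite γ] :
    ∫⁻ v, meanVariation ν φ v ∂γ =
      ∫⁻ ω, ∫⁻ x, ∫⁻ v, ‖fderiv ℝ (φ ω) x v‖ₑ ∂γ ∂volume ∂ν := by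
  have hmeas := hφ.measurable_absDirDeriv
  have hprod (v : Eucl (d + 1)) : meanVariation ν φ v =
      ∫⁻ p : Ω × Eucl (d + 1), absDirDeriv (φ p.1) p.2 v ∂ν.prod volume :=
    (lintegral_prod (fun p : Ω × Eucl (d + 1) => absDirDeriv (φ p.1) p.2 v)
      (hmeas.comp (by fun_prop : Measurable fun p : Ω × Eucl (d + 1) => (p, v))).aemeasurable).symm
  simp only [hprod]
  rw [lintegral_lintegral_swap (f := fun v (p : Ω × Eucl (d + 1)) => absDirDeriv (φ p.1) p.2 v)
    (hmeas.comp measurable_swap).aemeasurable, lintegral_prod _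
    hmeas.lintegral_prod_right'.aemeasurable]
  refine lintegral_congr fun ω => lintegral_congr_ae ?_
  filter_upwards [(hφ.lipschitzWith ω).ae_differentiableAt] with x hx
  simp only [absDirDeriv_eq_enorm_fderiv hx]

/-- Gaussian averages of `|∂ᵥφ|` over `v`, computed by invariance and by Fubini. -/
lemma lintegral_enorm_mul_meanVariation [SFinite ν] (hφ : RotInvFamily N L ν φ) :
    (∫⁻ v, ‖v‖ₑ ∂gaussMeasure (d + 1)) * meanVariation ν φ (Eucl.lastVec d) =
      (∫⁻ v, ‖v (Fin.last d)‖ₑ ∂gaussMeasure (d + 1)) *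
        ∫⁻ ω, ∫⁻ x, ‖fderiv ℝ (φ ω) x‖ₑ ∂volume ∂ν := by
  have hfinite : ∫⁻ v, ‖v (Fin.last d)‖ₑ ∂gaussMeasure (d + 1) ≠ ∞ := by
    rw [lintegral_enorm_last_gaussMeasure]
    exact ENNReal.ofReal_ne_top
  calc (∫⁻ v, ‖v‖ₑ ∂gaussMeasure (d + 1)) * meanVariation ν φ (Eucl.lastVec d)
      = ∫⁻ v, meanVariation ν φ v ∂gaussMeasure (d + 1) := by
        rw [lintegral_congr hφ.meanVariation_eq, lintegral_mul_const _ measurable_enorm]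
    _ = _ := by
        simp only [hφ.lintegral_meanVariation, lintegral_enorm_apply_gaussMeasure,
          lintegral_mul_const' _ _ hfinite]
        exact mul_comm _ _

lemma two_mul_meanIntegral_projLast_le (hφ : RotInvFamily N L ν φ) :
    2 * meanIntegral ν (fun ω => projLast (φ ω)) ≤ meanVariation ν φ (Eucl.lastVec d) := by
  rw [meanIntegral, ← lintegral_const_mul' _ _ ENNReal.ofNat_ne_top]
  refine lintegral_mono fun ω => ?_
  rw [lintegral_absDirDeriv (hφ.lipschitzWith ω)]
  exact two_mul_lintegral_projLast_le (hφ.lipschitzWith ω) (hφ.ballDecay ω).integrable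

lemma lintegral_enorm_fderiv_le (hN : 0 ≤ N) (hφ : RotInvFamily N L ν φ) :
    ∫⁻ ω, ∫⁻ x, ‖fderiv ℝ (φ ω) x‖ₑ ∂volume ∂ν ≤
      ENNReal.ofReal (N + (d + 1)) * meanIntegral ν φ := by
  rw [meanIntegral, ← lintegral_const_mul' _ _ ENNReal.ofReal_ne_top]
  refine lintegral_mono fun ω => ?_
  have hω := hφ.ballDecay ω
  rw [← ofReal_integral_eq_lintegral_ofReal hω.integrable (ae_of_all _ hω.nonneg),
    ← ENNReal.ofReal_mul (by positivity)]
  simpa using hω.lintegral_enorm_fderiv_le (hφ.lipschitzWith ω)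

lemma ballVol_mul_meanIntegral_projLast_le [SFinite ν] (hN : 0 ≤ N)
    (hφ : RotInvFamily N L ν φ) :
    ENNReal.ofReal ((d + 1) * ballVol (d + 1)) * meanIntegral ν (fun ω => projLast (φ ω)) ≤
      ENNReal.ofReal (N + (d + 1)) * (ENNReal.ofReal (ballVol d) * meanIntegral ν φ) := by
  set M := ∫⁻ v, ‖v (Fin.last d)‖ₑ ∂gaussMeasure (d + 1) with hM
  have hM_pos : M ≠ 0 := by
    rw [hM, lintegral_enorm_last_gaussMeasure]
    exact (ENNReal.ofReal_pos.2 (mul_pos (ballVol_pos d) (Gamma_half_add_one_pos d))).ne'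
  have hM_top : M ≠ ∞ := by
    rw [hM, lintegral_enorm_last_gaussMeasure]
    exact ENNReal.ofReal_ne_top
  rw [← ENNReal.mul_le_mul_iff_right hM_pos hM_top]
  calc M * (ENNReal.ofReal ((d + 1) * ballVol (d + 1)) *
        meanIntegral ν (fun ω => projLast (φ ω)))
      = ENNReal.ofReal (ballVol d) * ((∫⁻ v, ‖v‖ₑ ∂gaussMeasure (d + 1)) *
          (2 * meanIntegral ν (fun ω => projLast (φ ω)))) := by
        rw [← mul_assoc, mul_comm M, ballVol_mul_lintegral_last_gaussMeasure]
        ring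
    _ ≤ ENNReal.ofReal (ballVol d) *
          (M * (ENNReal.ofReal (N + (d + 1)) * meanIntegral ν φ)) := by
        grw [hφ.two_mul_meanIntegral_projLast_le, hφ.lintegral_enorm_mul_meanVariation,
          hφ.lintegral_enorm_fderiv_le hN]
    _ = M * (ENNReal.ofReal (N + (d + 1)) *
          (ENNReal.ofReal (ballVol d) * meanIntegral ν φ)) := by ring

end RotInvFamily

end RotInvFamily

section IteratedProjection

variable {N : ℝ} {L : ℝ≥0} {Ω : Type*} [MeasurableSpace Ω] {ν : Measure Ω}

lemma measurable_projLast {d : ℕ} {φ : Ω → Eucl (d + 1) → ℝ} (hcont : ∀ ω, Continuous (φ ω))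
    (hbdd : ∀ ω, BddAbove (Set.range (φ ω)))
    (hmeas : Measurable fun p : Ω × Eucl (d + 1) => φ p.1 p.2) :
    Measurable fun p : Ω × Eucl d => projLast (φ p.1) p.2 := by
  have hrat (p : Ω × Eucl d) :
      projLast (φ p.1) p.2 = ⨆ q : Set.range ((↑) : ℚ → ℝ), φ p.1 (Eucl.snoc p.2 q) :=
    (Rat.isDenseEmbedding_coe_real.dense.ciSup
      (f := fun r => φ p.1 (Eucl.snoc p.2 r))
      ((hcont p.1).comp (Eucl.isometry_snoc_right p.2).continuous)
      (bddAbove_range_snoc (hbdd p.1) p.2)).symm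
  simp only [hrat]
  have : Countable (Set.range ((↑) : ℚ → ℝ)) := (Set.countable_range _).to_subtype
  have hsnoc (r : ℝ) : Measurable fun y : Eucl d => Eucl.snoc y r :=
    (Eucl.isometry_snoc_left r).continuous.measurable
  exact Measurable.iSup fun q => hmeas.comp
    (measurable_fst.prodMk ((hsnoc q).comp measurable_snd))

namespace RotInvFamily

protected lemma projLast {d : ℕ} {φ : Ω → Eucl (d + 1) → ℝ} (hφ : RotInvFamily N L ν φ) :
    RotInvFamily N L ν fun ω => projLast (φ ω) where
  ballDecay ω := (hφ.ballDecay ω).projLast (hφ.lipschitzWith ω)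
  lipschitzWith ω := lipschitzWith_projLast (hφ.lipschitzWith ω) (hφ.ballDecay ω).bddAbove
  measurable := measurable_projLast (fun ω => (hφ.lipschitzWith ω).continuous)
    (fun ω => (hφ.ballDecay ω).bddAbove) hφ.measurable
  exists_eq_comp h := by
    obtain ⟨T, hT, hφT⟩ := hφ.exists_eq_comp (Eucl.extendIsometry h)
    exact ⟨T, hT, fun ω => by rw [hφT, projLast_comp_extendIsometry]⟩

lemma meanIntegral_projLast_le {d : ℕ} {φ : Ω → Eucl (d + 1) → ℝ} [SFinite ν] (hN : 0 ≤ N)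
    (hφ : RotInvFamily N L ν φ) :
    meanIntegral ν (fun ω => projLast (φ ω)) ≤
      ENNReal.ofReal ((N + (d + 1)) / (d + 1) * (ballVol d / ballVol (d + 1))) *
        meanIntegral ν φ := by
  have hpos : 0 < (d + 1) * ballVol (d + 1) := mul_pos (by positivity) (ballVol_pos _)
  rw [← ENNReal.mul_le_mul_iff_right (ENNReal.ofReal_pos.2 hpos).ne' ENNReal.ofReal_ne_top]
  refine (hφ.ballVol_mul_meanIntegral_projLast_le hN).trans_eq ?_
  rw [← mul_assoc, ← mul_assoc, ← ENNReal.ofReal_mul (by positivity), ← ENNReal.ofReal_mul hpos.le]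
  congr 2
  have := (ballVol_pos (d + 1)).ne'
  field_simp

end RotInvFamily

/-- The projection of `φ` to the first `k` coordinates. -/
def projFirst (k : ℕ) : (m : ℕ) → (Eucl (k + m) → ℝ) → Eucl k → ℝ
  | 0, φ => φ
  | m + 1, φ => projFirst k m (projLast (d := k + m) φ)

/-- The orthogonal projection of `ℝᵏ⁺ᵐ` to `ℝᵏ`. -/
def Eucl.firstCoords (k m : ℕ) : Eucl (k + m) →ₗ[ℝ] Eucl k where
  toFun w := WithLp.toLp 2 fun i => w (Fin.castAdd m i)
  map_add' _ _ := rfl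
  map_smul' _ _ := rfl

lemma le_projFirst (k m : ℕ) {φ : Eucl (k + m) → ℝ} (hφ : BddAbove (Set.range φ))
    (w : Eucl (k + m)) : φ w ≤ projFirst k m φ (Eucl.firstCoords k m w) := by
  induction m with
  | zero => exact le_rfl
  | succ m ih =>
    calc φ w = φ (Eucl.snoc (Eucl.init w) (w (Fin.last (k + m)))) :=
        congrArg φ (Eucl.snoc_init_last (d := k + m) w).symm
      _ ≤ projLast φ (Eucl.init w) := le_projLast hφ _ _
      _ ≤ projFirst k (m + 1) φ (Eucl.firstCoords k (m + 1) w) :=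
        ih (bddAbove_range_projLast hφ) _

lemma RotInvFamily.meanIntegral_projFirst_le [SFinite ν] (hN : 0 ≤ N) (k m : ℕ)
    {φ : Ω → Eucl (k + m) → ℝ} (hφ : RotInvFamily N L ν φ) :
    meanIntegral ν (fun ω => projFirst k m (φ ω)) ≤
      ENNReal.ofReal ((∏ j ∈ Finset.Icc (k + 1) (k + m), (N + j) / j) *
        (ballVol k / ballVol (k + m))) * meanIntegral ν φ := by
  induction m with
  | zero => simp [projFirst, (ballVol_pos k).ne']
  | succ m ih =>
    have hk := ballVol_pos k
    have hkm := ballVol_pos (k + m)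
    refine (ih hφ.projLast).trans ?_
    grw [RotInvFamily.meanIntegral_projLast_le (d := k + m) hN hφ]
    rw [← mul_assoc, ← ENNReal.ofReal_mul (by positivity)]
    refine le_of_eq (congrArg (ENNReal.ofReal · * _) ?_)
    rw [← add_assoc k m 1, Finset.prod_Icc_succ_top (by omega)]
    push_cast
    field_simp

end IteratedProjection

section OrthogonalGroup

variable {n : ℕ}

instance : BorelSpace (OG n) := ⟨rfl⟩

instance : CompactSpace (OG n) := by
  refine isCompact_iff_compactSpace.1 <| IsCompact.of_isClosed_subset (X := Matrix _ _ ℝ)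
    (isCompact_univ_pi fun _ : Fin n => isCompact_univ_pi fun _ : Fin n =>
      isCompact_closedBall (0 : ℝ) 1) isClosed_unitary ?_
  exact fun U hU i _ j _ => mem_closedBall_zero_iff.2 (entry_norm_bound_of_unitary hU i j)

lemma isMulRightInvariant_of_compactSpace {G : Type*} [TopologicalSpace G] [Group G]
    [IsTopologicalGroup G] [CompactSpace G] [MeasurableSpace G] [BorelSpace G] (ν : Measure G)
    [IsProbabilityMeasure ν] [ν.IsMulLeftInvariant] : ν.IsMulRightInvariant where
  map_mul_right_eq_self g := by
    have hν : ν.IsHaarMeasure := Measure.isHaarMeasure_of_isCompact_nonempty_interior ν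
      Set.univ isCompact_univ (by simp) (by simp) (by simp)
    have : IsProbabilityMeasure (ν.map (· * g)) :=
      Measure.isProbabilityMeasure_map (measurable_mul_const g).aemeasurable
    exact Measure.isHaarMeasure_eq_of_isProbabilityMeasure _ _

/-- The identification of orthogonal matrices with the linear isometries of `ℝⁿ`. -/
def OG.toIsometry : OG n ≃* (Eucl n ≃ₗᵢ[ℝ] Eucl n) :=
  (Unitary.mapEquiv (StarMulEquiv.mk
    (Matrix.toEuclideanCLM (n := Fin n) (𝕜 := ℝ)).toRingEquiv.toMulEquiv
    (map_star (Matrix.toEuclideanCLM (n := Fin n) (𝕜 := ℝ))))).toMulEquiv.trans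
    Unitary.linearIsometryEquiv

lemma OG.continuous_toIsometry : Continuous fun p : OG n × Eucl n => OG.toIsometry p.1 p.2 := by
  have hmulVec : Continuous fun p : OG n × Eucl n =>
      (p.1 : Matrix (Fin n) (Fin n) ℝ).mulVec p.2.ofLp :=
    Continuous.matrix_mulVec (by fun_prop) (by fun_prop)
  exact (PiLp.continuous_toLp 2 _).comp hmulVec

end OrthogonalGroup

section OrthogonalOrbit

variable {n : ℕ} {N : ℝ} {L : ℝ≥0} {F : Eucl n → ℝ}

lemma BallDecay.comp_isometry (hF : BallDecay N F) (h : Eucl n ≃ₗᵢ[ℝ] Eucl n) :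
    BallDecay N (F ∘ h) where
  nonneg _ := hF.nonneg _
  bddAbove := hF.bddAbove.mono (Set.range_comp_subset_range h F)
  integrable := h.measurePreserving.integrable_comp_of_integrable hF.integrable
  exp_mul_le x v t hv ht₀ ht₁ := by
    simpa using hF.exp_mul_le (h x) (h v) t (by rwa [h.norm_map]) ht₀ ht₁

variable (ν : Measure (OG n)) [IsProbabilityMeasure ν]

lemma rotInvFamily_comp_toIsometry [ν.IsMulLeftInvariant] (hF : BallDecay N F)
    (hL : LipschitzWith L F) : RotInvFamily N L ν fun g => F ∘ OG.toIsometry g where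
  ballDecay g := hF.comp_isometry _
  lipschitzWith g := mul_one L ▸ hL.comp (OG.toIsometry g).isometry.lipschitz
  measurable := (hL.continuous.comp OG.continuous_toIsometry).measurable
  exists_eq_comp h := by
    have := isMulRightInvariant_of_compactSpace ν
    obtain ⟨g, rfl⟩ := OG.toIsometry.surjective h
    exact ⟨(· * g), measurePreserving_mul_right ν g, fun ω => by
      rw [map_mul, LinearIsometryEquiv.coe_mul, Function.comp_assoc]⟩

lemma meanIntegral_comp_toIsometry (hF : ∀ x, 0 ≤ F x) (hint : Integrable F) :
    meanIntegral ν (fun g => F ∘ OG.toIsometry g) = ENNReal.ofReal (∫ x, F x) := by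
  have hinv (g : OG n) : ∫⁻ x, ENNReal.ofReal ((F ∘ OG.toIsometry g) x) =
      ENNReal.ofReal (∫ x, F x) := by
    rw [ofReal_integral_eq_lintegral_ofReal hint (ae_of_all _ hF)]
    exact (OG.toIsometry g).measurePreserving.lintegral_comp_emb
      (OG.toIsometry g).toMeasurableEquiv.measurableEmbedding (fun x => ENNReal.ofReal (F x))
  simp only [meanIntegral, hinv, lintegral_const, measure_univ, mul_one]

end OrthogonalOrbit

section StdSubspace

namespace Eucl

/-- The inclusion of `ℝᵏ` as a coordinate subspace of `ℝᵏ⁺ᵐ`. -/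
def appendZero (k m : ℕ) : Eucl k →ₗᵢ[ℝ] Eucl (k + m) where
  toFun y := WithLp.toLp 2 (Fin.append y.ofLp 0)
  map_add' x y := by
    ext i
    refine Fin.addCases (fun i => ?_) (fun i => ?_) i <;> simp
  map_smul' c x := by
    ext i
    refine Fin.addCases (fun i => ?_) (fun i => ?_) i <;> simp
  norm_map' y := by simp [EuclideanSpace.norm_eq, Fin.sum_univ_add]

variable {k m : ℕ}

lemma appendZero_apply (y : Eucl k) (i : Fin (k + m)) :
    appendZero k m y i = Fin.append y.ofLp 0 i := rfl

lemma firstCoords_apply (w : Eucl (k + m)) (i : Fin k) :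
    firstCoords k m w i = w (Fin.castAdd m i) := rfl

lemma firstCoords_appendZero (y : Eucl k) : firstCoords k m (appendZero k m y) = y := by
  ext i
  exact Fin.append_left y.ofLp 0 i

lemma inner_appendZero (y : Eucl k) (w : Eucl (k + m)) :
    inner ℝ (appendZero k m y) w = inner ℝ y (firstCoords k m w) := by
  simp [PiLp.inner_apply, Fin.sum_univ_add, appendZero_apply, firstCoords_apply]

lemma appendZero_single (i : Fin k) :
    appendZero k m (EuclideanSpace.single i 1) = EuclideanSpace.single (Fin.castAdd m i) 1 := by
  ext j
  refine Fin.addCases (fun j => ?_) (fun j => ?_) j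
  · simp [appendZero_apply, Pi.single_apply]
  · have hij : Fin.natAdd k j ≠ Fin.castAdd m i :=
      Fin.ne_of_val_ne (i.2.trans_le (k.le_add_right j)).ne'
    simp [appendZero_apply, hij]

end Eucl

variable {k m : ℕ}

lemma range_appendZero : (Eucl.appendZero k m).range = stdSubspace (k + m) k := by
  rw [LinearMap.range_eq_map, ← (EuclideanSpace.basisFun (Fin k) ℝ).toBasis.span_eq,
    Submodule.map_span, ← Set.range_comp, stdSubspace]
  congr 1
  ext v
  constructor
  · rintro ⟨i, rfl⟩
    exact ⟨Fin.castAdd m i, i.2, by simp [Eucl.appendZero_single]⟩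
  · rintro ⟨i, hi, rfl⟩
    exact ⟨⟨i, hi⟩, by simp [Eucl.appendZero_single]⟩

/-- The identification of `ℝᵏ` with the coordinate subspace `H₀ᵏ` of `ℝᵏ⁺ᵐ`. -/
def stdIsometry (k m : ℕ) : Eucl k ≃ₗᵢ[ℝ] stdSubspace (k + m) k :=
  (Eucl.appendZero k m).equivRange.trans (LinearIsometryEquiv.ofEq _ _ range_appendZero)

lemma firstCoords_stdIsometry_add (y : Eucl k) (z : (stdSubspace (k + m) k)ᗮ) :
    Eucl.firstCoords k m (stdIsometry k m y + z) = y := by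
  have hz : Eucl.firstCoords k m z = 0 := ext_inner_left ℝ fun u => by
    rw [← Eucl.inner_appendZero, inner_zero_right]
    exact z.2 _ (range_appendZero ▸ LinearMap.mem_range_self _ u)
  rw [map_add, hz, add_zero]
  exact Eucl.firstCoords_appendZero y

lemma enorm_projL1_le {f F : Eucl (k + m) → ℝ} (hf : ∀ x, 0 ≤ f x) (hfF : ∀ x, f x ≤ F x)
    (hF : BddAbove (Set.range F)) :
    ‖projL1 f (stdSubspace (k + m) k)‖ₑ ≤ ∫⁻ y, ENNReal.ofReal (projFirst k m F y) := by
  let e := stdIsometry k m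
  rw [projL1, ← e.measurePreserving.integral_comp e.toMeasurableEquiv.measurableEmbedding]
  refine (enorm_integral_le_lintegral_enorm _).trans (lintegral_mono fun y => ?_)
  rw [Real.enorm_of_nonneg (Real.iSup_nonneg fun _ => hf _)]
  refine ENNReal.ofReal_le_ofReal (ciSup_le fun z => (hfF _).trans ?_)
  simpa only [e, firstCoords_stdIsometry_add] using le_projFirst k m hF (e y + z)

lemma ofReal_supNorm_le {f F : Eucl (0 + m) → ℝ} (hfF : ∀ x, f x ≤ F x)
    (hF : BddAbove (Set.range F)) :
    ENNReal.ofReal (supNorm f) ≤ ∫⁻ y, ENNReal.ofReal (projFirst 0 m F y) := by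
  have hconst : ∫⁻ _ : Eucl 0, ENNReal.ofReal (supNorm f) = ENNReal.ofReal (supNorm f) := by
    rw [lintegral_const, volume_euclideanSpace_eq_dirac, measure_univ, mul_one]
  rw [← hconst]
  refine lintegral_mono fun y => ENNReal.ofReal_le_ofReal (ciSup_le fun x => (hfF x).trans ?_)
  rw [Subsingleton.elim y (Eucl.firstCoords 0 m x)]
  exact le_projFirst 0 m hF x

end StdSubspace

section Querm

variable {k m : ℕ} {N : ℝ} {L : ℝ≥0} {f F : Eucl (k + m) → ℝ} (ν : Measure (OG (k + m)))

lemma querm_eq_ballVol_mul_supNorm (ν : Measure (OG (0 + m))) (f : Eucl (0 + m) → ℝ) :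
    querm ν f m = ballVol (0 + m) * supNorm f :=
  if_pos (zero_add m).symm

lemma querm_eq_integral_projL1 (hk : k ≠ 0) (f : Eucl (k + m) → ℝ) :
    querm ν f m = ballVol (k + m) / ballVol k *
      ∫ g, projL1 (f ∘ OG.toIsometry g) (stdSubspace (k + m) k) ∂ν := by
  have hcongr (k' : ℕ) (hk' : k' = k) : ballVol (k + m) / ballVol k' *
      ∫ g, projL1 (f ∘ OG.toIsometry g) (stdSubspace (k + m) k') ∂ν =
      ballVol (k + m) / ballVol k *
        ∫ g, projL1 (f ∘ OG.toIsometry g) (stdSubspace (k + m) k) ∂ν := by rw [hk']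
  rw [querm, if_neg (by omega)]
  exact hcongr _ (Nat.add_sub_cancel k m)

lemma ballVol_zero : ballVol 0 = 1 := by
  rw [ballVol, volume_euclideanSpace_eq_dirac, Measure.dirac_apply_of_mem (by simp),
    ENNReal.toReal_one]

lemma supNorm_comp_isometry {n : ℕ} (h : Eucl n ≃ₗᵢ[ℝ] Eucl n) (f : Eucl n → ℝ) :
    supNorm (f ∘ h) = supNorm f :=
  h.toEquiv.iSup_comp

variable [IsProbabilityMeasure ν] [ν.IsMulLeftInvariant]

lemma ballVol_div_mul_le_of_le_meanIntegral (hN : 0 ≤ N) (hF : BallDecay N F)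
    (hL : LipschitzWith L F) {A : ℝ}
    (hA : ENNReal.ofReal A ≤ meanIntegral ν fun g => projFirst k m (F ∘ OG.toIsometry g)) :
    ballVol (k + m) / ballVol k * A ≤
      (∏ j ∈ Finset.Icc (k + 1) (k + m), (N + j) / j) * ∫ x, F x := by
  have hk := ballVol_pos k
  have hkm := ballVol_pos (k + m)
  have hint : 0 ≤ ∫ x, F x := integral_nonneg hF.nonneg
  have hmean := hA.trans
    ((rotInvFamily_comp_toIsometry ν hF hL).meanIntegral_projFirst_le hN k m)
  rw [meanIntegral_comp_toIsometry ν hF.nonneg hF.integrable,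
    ← ENNReal.ofReal_mul (by positivity), ENNReal.ofReal_le_ofReal_iff (by positivity)] at hmean
  refine (mul_le_mul_of_nonneg_left hmean (by positivity)).trans_eq ?_
  field_simp

lemma querm_le_of_le (hN : 0 ≤ N) (hf : ∀ x, 0 ≤ f x) (hfF : ∀ x, f x ≤ F x)
    (hF : BallDecay N F) (hL : LipschitzWith L F) :
    querm ν f m ≤ (∏ j ∈ Finset.Icc (k + 1) (k + m), (N + j) / j) * ∫ x, F x := by
  have hbdd (g : OG (k + m)) := (hF.comp_isometry (OG.toIsometry g)).bddAbove
  rcases eq_or_ne k 0 with rfl | hk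
  · rw [querm_eq_ballVol_mul_supNorm, ← div_one (ballVol (0 + m)), ← ballVol_zero]
    refine ballVol_div_mul_le_of_le_meanIntegral ν hN hF hL ?_
    calc ENNReal.ofReal (supNorm f) = ∫⁻ _, ENNReal.ofReal (supNorm f) ∂ν := by simp
      _ ≤ _ := lintegral_mono fun g => by
        rw [← supNorm_comp_isometry (OG.toIsometry g)]
        exact ofReal_supNorm_le (fun x => hfF _) (hbdd g)
  · rw [querm_eq_integral_projL1 ν hk]
    refine ballVol_div_mul_le_of_le_meanIntegral ν hN hF hL ?_
    calc ENNReal.ofReal _ ≤ ‖_‖ₑ := Real.ofReal_le_enorm _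
      _ ≤ _ := enorm_integral_le_lintegral_enorm _
      _ ≤ _ := lintegral_mono fun g => enorm_projL1_le (fun _ => hf _) (fun _ => hfF _) (hbdd g)

end Querm

section LipReg

variable {E : Type*} [NormedAddCommGroup E]

/-- The sup-convolution of `f` with cones of slope `l`: a Lipschitz majorant of a bounded
`f ≥ 0`. -/
def lipReg (l : ℝ) (f : E → ℝ) (x : E) : ℝ := ⨆ y, f y * max 0 (1 - l * ‖x - y‖)

variable {l M : ℝ} {f : E → ℝ}

lemma mul_cone_le (hl : 0 ≤ l) (hf : ∀ x, 0 ≤ f x) (x y : E) :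
    f y * max 0 (1 - l * ‖x - y‖) ≤ f y :=
  mul_le_of_le_one_right (hf y) (max_le zero_le_one (sub_le_self 1 (by positivity)))

lemma lipReg_le_of_le (hl : 0 ≤ l) (hf : ∀ x, 0 ≤ f x) (hM : ∀ x, f x ≤ M) (x : E) :
    lipReg l f x ≤ M :=
  ciSup_le fun y => (mul_cone_le hl hf x y).trans (hM y)

lemma mul_cone_le_lipReg (hl : 0 ≤ l) (hf : ∀ x, 0 ≤ f x) (hM : ∀ x, f x ≤ M) (x y : E) :
    f y * max 0 (1 - l * ‖x - y‖) ≤ lipReg l f x :=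
  le_ciSup (f := fun y => f y * max 0 (1 - l * ‖x - y‖))
    ⟨M, Set.forall_mem_range.2 fun y => (mul_cone_le hl hf x y).trans (hM y)⟩ y

lemma self_le_lipReg (hl : 0 ≤ l) (hf : ∀ x, 0 ≤ f x) (hM : ∀ x, f x ≤ M) (x : E) :
    f x ≤ lipReg l f x := by
  simpa using mul_cone_le_lipReg hl hf hM x x

lemma lipschitzWith_lipReg (hl : 0 ≤ l) (hf : ∀ x, 0 ≤ f x) (hM : ∀ x, f x ≤ M) :
    LipschitzWith (l * M).toNNReal (lipReg l f) := by
  have hM₀ : 0 ≤ M := (hf 0).trans (hM 0)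
  refine LipschitzWith.of_le_add_mul _ fun x x' => ciSup_le fun y => ?_
  rw [Real.coe_toNNReal _ (by positivity), dist_eq_norm]
  have hcone : max 0 (1 - l * ‖x - y‖) ≤ max 0 (1 - l * ‖x' - y‖) + l * ‖x - x'‖ := by
    have htri := mul_le_mul_of_nonneg_left (norm_sub_le_norm_sub_add_norm_sub x' x y) hl
    rw [norm_sub_rev x' x] at htri
    refine max_le (by positivity) ?_
    linarith [le_max_right 0 (1 - l * ‖x' - y‖)]
  calc f y * max 0 (1 - l * ‖x - y‖)
      ≤ f y * (max 0 (1 - l * ‖x' - y‖) + l * ‖x - x'‖) :=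
        mul_le_mul_of_nonneg_left hcone (hf y)
    _ = f y * max 0 (1 - l * ‖x' - y‖) + f y * (l * ‖x - x'‖) := mul_add _ _ _
    _ ≤ lipReg l f x' + M * (l * ‖x - x'‖) :=
        add_le_add (mul_cone_le_lipReg hl hf hM x' y)
          (mul_le_mul_of_nonneg_right (hM y) (by positivity))
    _ = lipReg l f x' + l * M * ‖x - x'‖ := by ring

end LipReg

namespace BallDecay

variable {E : Type*} [NormedAddCommGroup E] [NormedSpace ℝ E] [MeasureSpace E] {N : ℝ}
  {f : E → ℝ}

lemma le_iSup (hf : BallDecay N f) (x : E) : f x ≤ ⨆ y, f y := le_ciSup hf.bddAbove x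

lemma exp_mul_lipReg_le (hf : BallDecay N f) {l : ℝ} (hl : 0 ≤ l) (x v : E) (t : ℝ)
    (hv : ‖v‖ ≤ 1) (ht₀ : 0 ≤ t) (ht₁ : t ≤ 1) :
    Real.exp (-(N * t)) * lipReg l f x ≤ lipReg l f ((1 - t) • x + t • v) := by
  rw [lipReg, Real.mul_iSup_of_nonneg (Real.exp_pos _).le]
  refine ciSup_le fun y => ?_
  have hcone : l * ‖(1 - t) • x + t • v - ((1 - t) • y + t • v)‖ ≤ l * ‖x - y‖ := by
    rw [add_sub_add_right_eq_sub, ← smul_sub, norm_smul, Real.norm_of_nonneg (by linarith)]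
    exact mul_le_mul_of_nonneg_left
      (mul_le_of_le_one_left (norm_nonneg _) (sub_le_self 1 ht₀)) hl
  rw [← mul_assoc]
  exact (mul_le_mul (hf.exp_mul_le y v t hv ht₀ ht₁)
    (max_le_max le_rfl (sub_le_sub_left hcone 1)) (le_max_left _ _) (hf.nonneg _)).trans
    (mul_cone_le_lipReg hl hf.nonneg hf.le_iSup _ _)

/-- With this slope `(1 - t) • x` lies on a segment from any `y` in the support of the cone at `x`
to the unit ball, at parameter `t`. -/
lemma lipReg_le (hf : BallDecay N f) {t : ℝ} (ht₀ : 0 < t) (ht₁ : t < 1) (x : E) :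
    lipReg ((1 - t) / t) f x ≤ Real.exp (N * t) * f ((1 - t) • x) := by
  set l := (1 - t) / t with hl
  have hl₀ : 0 ≤ l := div_nonneg (sub_pos.2 ht₁).le ht₀.le
  refine ciSup_le fun y => ?_
  rcases le_or_gt (l * ‖x - y‖) 1 with hxy | hxy
  · have hdecay := hf.exp_mul_le y (l • (x - y)) t
      (by rwa [norm_smul, Real.norm_of_nonneg hl₀]) ht₀.le ht₁.le
    have hsegment : (1 - t) • y + t • l • (x - y) = (1 - t) • x := by
      rw [smul_smul, hl, mul_div_cancel₀ _ ht₀.ne']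
      module
    rw [hsegment, Real.exp_neg, inv_mul_le_iff₀ (Real.exp_pos _)] at hdecay
    exact (mul_cone_le hl₀ hf.nonneg x y).trans hdecay
  · rw [max_eq_left (by linarith), mul_zero]
    exact mul_nonneg (Real.exp_pos _).le (hf.nonneg _)

variable [BorelSpace E] [FiniteDimensional ℝ E] [(volume : Measure E).IsAddHaarMeasure]

protected lemma lipReg (hf : BallDecay N f) {t : ℝ} (ht₀ : 0 < t) (ht₁ : t < 1) :
    BallDecay N (lipReg ((1 - t) / t) f) where
  nonneg x := (hf.nonneg x).trans (self_le_lipReg (by bound) hf.nonneg hf.le_iSup x)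
  bddAbove := ⟨_, Set.forall_mem_range.2 (lipReg_le_of_le (by bound) hf.nonneg hf.le_iSup)⟩
  integrable := by
    have hlip := lipschitzWith_lipReg (l := (1 - t) / t) (by bound) hf.nonneg hf.le_iSup
    refine ((hf.integrable.comp_smul (sub_pos.2 ht₁).ne').const_mul (Real.exp (N * t))).mono'
      hlip.continuous.aestronglyMeasurable (ae_of_all _ fun x => ?_)
    rw [Real.norm_of_nonneg
      ((hf.nonneg x).trans (self_le_lipReg (by bound) hf.nonneg hf.le_iSup x))]
    exact hf.lipReg_le ht₀ ht₁ x
  exp_mul_le := hf.exp_mul_lipReg_le (by bound)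

lemma integral_lipReg_le (hf : BallDecay N f) {t : ℝ} (ht₀ : 0 < t) (ht₁ : t < 1) :
    ∫ x, lipReg ((1 - t) / t) f x ≤
      Real.exp (N * t) * ((1 - t) ^ Module.finrank ℝ E)⁻¹ * ∫ x, f x := by
  have ht : 0 < 1 - t := sub_pos.2 ht₁
  refine (integral_mono (hf.lipReg ht₀ ht₁).integrable
    ((hf.integrable.comp_smul ht.ne').const_mul _) (hf.lipReg_le ht₀ ht₁)).trans_eq ?_
  rw [integral_const_mul, Measure.integral_comp_smul, smul_eq_mul, abs_of_pos (by positivity),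
    mul_assoc]

end BallDecay

section LogConcave

lemma exists_pos_measure_le_ne_zero {α : Type*} [MeasurableSpace α] {μ : Measure α} {f : α → ℝ}
    (hf : ∀ x, 0 ≤ f x) (hpos : 0 < ∫ x, f x ∂μ) : ∃ ε > 0, μ {x | ε ≤ f x} ≠ 0 := by
  have hint : Integrable f μ := .of_integral_ne_zero hpos.ne'
  have hsupport := (integral_pos_iff_support_of_nonneg hf hint).1 hpos
  have hcover : Function.support f ⊆ ⋃ j : ℕ, {x | 1 / ((j : ℝ) + 1) ≤ f x} := fun x hx =>
    have ⟨j, hj⟩ := exists_nat_one_div_lt ((hf x).lt_of_ne' hx)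
    Set.mem_iUnion.2 ⟨j, hj.le⟩
  obtain ⟨j, hj⟩ := exists_measure_pos_of_not_measure_iUnion_null
    (hsupport.trans_le (measure_mono hcover)).ne'
  exact ⟨1 / (j + 1), by positivity, hj.ne'⟩

namespace IsLogConcave

variable {n : ℕ} {f : Eucl n → ℝ}

lemma sqrt_mul_sqrt_le (hf : IsLogConcave f) (x y : Eucl n) :
    √(f x) * √(f y) ≤ f (AffineMap.homothety y (1 / 2 : ℝ) x) := by
  have hmid := hf x y (1 / 2) (by norm_num) (by norm_num)
  rw [show (1 : ℝ) - 1 / 2 = 1 / 2 by norm_num, ← Real.sqrt_eq_rpow, ← Real.sqrt_eq_rpow] at hmid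
  convert hmid using 2
  rw [AffineMap.homothety_apply, vsub_eq_sub, vadd_eq_add]
  module

/-- Shrinking a superlevel set of positive measure towards `y` gives a set of fixed measure on
which `f` is at least a constant times `√(f y)`; compare with Markov's inequality. -/
lemma bddAbove_range (hf : IsLogConcave f) (hf₀ : ∀ x, 0 ≤ f x) (hpos : 0 < ∫ x, f x) :
    BddAbove (Set.range f) := by
  have hint : Integrable f := .of_integral_ne_zero hpos.ne'
  obtain ⟨ε, hε, hvol⟩ := exists_pos_measure_le_ne_zero hf₀ hpos
  set K := {x | ε ≤ f x}
  set κ := (1 / 2 : ℝ) ^ n * volume.real K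
  have hκ₀ : 0 < κ :=
    mul_pos (by positivity) (ENNReal.toReal_pos hvol (hint.measure_ge_lt_top hε).ne)
  refine ⟨((∫ x, f x) / (√ε * κ)) ^ 2, Set.forall_mem_range.2 fun y => ?_⟩
  rcases (hf₀ y).eq_or_lt with hy | hy
  · exact hy ▸ sq_nonneg _
  have hsub : AffineMap.homothety y (1 / 2 : ℝ) '' K ⊆ {x | √ε * √(f y) ≤ f x} := by
    rintro _ ⟨x, hx, rfl⟩
    exact (mul_le_mul_of_nonneg_right (Real.sqrt_le_sqrt hx) (Real.sqrt_nonneg _)).trans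
      (hf.sqrt_mul_sqrt_le x y)
  have hmono : κ ≤ volume.real {x | √ε * √(f y) ≤ f x} := by
    have := measureReal_mono hsub (hint.measure_ge_lt_top (by positivity)).ne
    rwa [measureReal_def, Measure.addHaar_image_homothety, ENNReal.toReal_mul,
      ENNReal.toReal_ofReal (abs_nonneg _), abs_of_pos (by positivity),
      finrank_euclideanSpace_fin] at this
  have hmarkov : √ε * √(f y) * κ ≤ ∫ x, f x :=
    (mul_le_mul_of_nonneg_left hmono (by positivity)).trans
      (mul_meas_ge_le_integral_of_nonneg (ae_of_all _ hf₀) hint _)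
  refine (Real.sqrt_le_left (by positivity)).1 ((le_div_iff₀ (by positivity)).2 ?_)
  linarith

lemma ballDecay (hf : IsLogConcave f) (hf₀ : ∀ x, 0 ≤ f x) (hpos : 0 < ∫ x, f x) {N : ℝ}
    (hball : ∀ v, ‖v‖ ≤ 1 → Real.exp (-N) * supNorm f ≤ f v) : BallDecay N f where
  nonneg := hf₀
  bddAbove := hf.bddAbove_range hf₀ hpos
  integrable := .of_integral_ne_zero hpos.ne'
  exp_mul_le x v t hv ht₀ ht₁ := by
    have hx : Real.exp (-N) * f x ≤ f v := (mul_le_mul_of_nonneg_left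
      (le_ciSup (hf.bddAbove_range hf₀ hpos) x) (Real.exp_pos _).le).trans (hball v hv)
    rcases ht₀.eq_or_lt with rfl | ht₀
    · simp
    rcases ht₁.eq_or_lt with rfl | ht₁
    · simpa using hx
    calc Real.exp (-(N * t)) * f x = (Real.exp (-N) * f x) ^ t * f x ^ (1 - t) := by
          rw [Real.mul_rpow (Real.exp_pos _).le (hf₀ x), ← Real.exp_mul, mul_assoc,
            ← Real.rpow_add' (hf₀ x) (by simp), add_sub_cancel, Real.rpow_one, neg_mul]
      _ ≤ f v ^ t * f x ^ (1 - t) := mul_le_mul_of_nonneg_right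
          (Real.rpow_le_rpow (mul_nonneg (Real.exp_pos _).le (hf₀ x)) hx ht₀.le)
          (Real.rpow_nonneg (hf₀ x) _)
      _ ≤ f ((1 - t) • x + t • v) := add_comm (t • v) ((1 - t) • x) ▸ hf v x t ht₀ ht₁

lemma ballDecay_of_indicator_le (hf : IsLogConcave f) (hf₀ : ∀ x, 0 ≤ f x) (hpos : 0 < ∫ x, f x)
    {N a : ℝ} (ha : Real.exp (-N) ≤ a) (hball : ∀ x, a * supNorm f *
      (Metric.closedBall (0 : Eucl n) 1).indicator (fun _ => (1 : ℝ)) x ≤ f x) :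
    BallDecay N f :=
  hf.ballDecay hf₀ hpos fun v hv => by
    have hv' := hball v
    rw [Set.indicator_of_mem (mem_closedBall_zero_iff.2 hv), mul_one] at hv'
    exact (mul_le_mul_of_nonneg_right ha (Real.iSup_nonneg hf₀)).trans hv'

end IsLogConcave

end LogConcave

theorem querm_le_of_john_position_general {n k : ℕ} (hk : k ≤ n) {N : ℝ} (hN : 0 ≤ N)
    {f : Eucl n → ℝ} (hf : BallDecay N f) (ν : Measure (OG n)) [IsProbabilityMeasure ν]
    [ν.IsMulLeftInvariant] :
    querm ν f (n - k) ≤ (∏ j ∈ Finset.Icc (k + 1) n, (N + j) / j) * ∫ x, f x := by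
  obtain ⟨m, rfl⟩ := Nat.exists_eq_add_of_le hk
  rw [Nat.add_sub_cancel_left]
  set b := ∏ j ∈ Finset.Icc (k + 1) (k + m), (N + j) / j
  have hcont : ContinuousAt (fun t : ℝ =>
      b * (Real.exp (N * t) * ((1 - t) ^ (k + m))⁻¹ * ∫ x, f x)) 0 := by
    fun_prop (disch := simp)
  have hlim : Tendsto (fun t : ℝ => b * (Real.exp (N * t) * ((1 - t) ^ (k + m))⁻¹ * ∫ x, f x))
      (𝓝[>] 0) (𝓝 (b * ∫ x, f x)) := by
    simpa using hcont.tendsto.mono_left nhdsWithin_le_nhds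
  refine ge_of_tendsto hlim ?_
  filter_upwards [Ioo_mem_nhdsGT zero_lt_one] with t ⟨ht₀, ht₁⟩
  have hl : 0 ≤ (1 - t) / t := div_nonneg (sub_pos.2 ht₁).le ht₀.le
  refine (querm_le_of_le ν hN hf.nonneg (self_le_lipReg hl hf.nonneg hf.le_iSup)
    (hf.lipReg ht₀ ht₁) (lipschitzWith_lipReg hl hf.nonneg hf.le_iSup)).trans ?_
  have hreg := hf.integral_lipReg_le ht₀ ht₁
  rw [finrank_euclideanSpace_fin] at hreg
  exact mul_le_mul_of_nonneg_left hreg (Finset.prod_nonneg fun j _ => by positivity)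

/-- **Corollary 4.2**: for `f ∈ Q₀ⁿ` in John's position,
`W_{n−k}(f) ≤ b_{n,k} · ‖f‖₁` where `b_{n,k} = ∏_{j=k+1}^n (n+j)/j`. -/
theorem querm_le_of_john_position (n k : ℕ) (hn : 1 ≤ n) (hk : k ≤ n - 1)
    (f : Eucl n → ℝ) (hf : MemQ0 f)
    (hJohn : ∃ a : ℝ, a ∈ Set.Icc (Real.exp (-(n : ℝ))) 1 ∧
      ∀ x : Eucl n,
        a * supNorm f * (Metric.closedBall (0 : Eucl n) 1).indicator
          (fun _ => (1 : ℝ)) x ≤ f x)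
    (ν : Measure (OG n)) [IsProbabilityMeasure ν] [ν.IsMulLeftInvariant] :
    querm ν f (n - k) ≤
      (∏ j ∈ Finset.Icc (k + 1) n, (((n : ℝ) + j) / j)) * ∫ x, f x := by
  obtain ⟨a, ⟨ha, -⟩, hball⟩ := hJohn
  exact querm_le_of_john_position_general (hk.trans (n.sub_le 1)) n.cast_nonneg
    (hf.2.1.ballDecay_of_indicator_le hf.1 hf.2.2.2.2 ha hball) ν
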